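/- Let M₁ and M₂ be finite MDPs with the same discount factor γ ∈ [0,1), d^{1-2} their GBSM, π : S₁ → A₁ a deterministic policy on M₁, f : S₂ → S₁ a state mapping and g : A₁ → A₂ an action mapping. Let V₁* and V₂* satisfy the Bellman optimality equations in M₁ and M₂, let V₁^π satisfy V₁^π(s) = R₁(s,π(s)) + γ·Σ_{s̃} P₁(s̃|s,π(s))·V₁^π(s̃), and let V₂^π satisfy V₂^π(s') = R₂(s',g(π(f(s')))) + γ·Σ_{s̃} P₂(s̃|s',g(π(f(s'))))·V₂^π(s̃). Then max_{s'∈S₂} |V₂*(s') − V₂^π(s')| ≤ ( max_{s'∈S₂} d^{1-2}(f(s'),s') + max_{s'∈S₂, a∈A₁} δ(d^{1-2})((f(s'),a),(s',g(a))) + (1+γ)·max_{s∈S₁} |V₁*(s) − V₁^π(s)| ) / (1−γ). -/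

import Mathlib

open scoped BigOperators

noncomputable section

/-- The (finite, linear-programming) 1-Wasserstein distance between probability
vectors `P` on `S₁` and `Q` on `S₂` with cost function `d`. -/
def W1 {S₁ S₂ : Type*} [Fintype S₁] [Fintype S₂]
    (P : S₁ → ℝ) (Q : S₂ → ℝ) (d : S₁ → S₂ → ℝ) : ℝ :=
  sInf { c : ℝ | ∃ lam : S₁ → S₂ → ℝ,
    (∀ i j, 0 ≤ lam i j) ∧ (∀ i, ∑ j, lam i j = P i) ∧
    (∀ j, ∑ i, lam i j = Q j) ∧ c = ∑ i, ∑ j, lam i j * d i j }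

/-- A finite Markov decision process (without its discount factor). -/
structure FinMDP (S A : Type*) [Fintype S] [Fintype A] where
  P : S → A → S → ℝ
  R : S → A → ℝ
  P_nonneg : ∀ s a s', 0 ≤ P s a s'
  P_sum : ∀ s a, ∑ s', P s a s' = 1

variable {S₁ A₁ S₂ A₂ : Type*} [Fintype S₁] [Fintype A₁] [Fintype S₂] [Fintype A₂]

/-- `δ(d)((s,a),(s',a')) = |R₁(s,a) − R₂(s',a')| + γ·W₁(P₁(·|s,a), P₂(·|s',a'); d)` -/
def gbsmDelta (M₁ : FinMDP S₁ A₁) (M₂ : FinMDP S₂ A₂) (γ : ℝ)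
    (d : S₁ → S₂ → ℝ) (s : S₁) (a : A₁) (s' : S₂) (a' : A₂) : ℝ :=
  |M₁.R s a - M₂.R s' a'| + γ * W1 (M₁.P s a) (M₂.P s' a') d

/-- The GBSM operator `F(d)(s,s') = H(X_s, X_{s'}; δ(d))` where `H` is the Hausdorff
metric between the finite sets `X_s = {(s,a)}`, `X_{s'} = {(s',a')}`. -/
def gbsmF (M₁ : FinMDP S₁ A₁) (M₂ : FinMDP S₂ A₂) (γ : ℝ)
    (d : S₁ → S₂ → ℝ) : S₁ → S₂ → ℝ :=
  fun s s' =>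
    max (⨆ a : A₁, ⨅ a' : A₂, gbsmDelta M₁ M₂ γ d s a s' a')
        (⨅ a : A₁, ⨆ a' : A₂, gbsmDelta M₁ M₂ γ d s a s' a')

/-- The GBSM: pointwise supremum of the iterates of `gbsmF` from the zero function. -/
def gbsm (M₁ : FinMDP S₁ A₁) (M₂ : FinMDP S₂ A₂) (γ : ℝ) : S₁ → S₂ → ℝ :=
  fun s s' => ⨆ n : ℕ, (gbsmF M₁ M₂ γ)^[n] (fun _ _ => 0) s s'


variable [Nonempty S₁] [Nonempty A₁] [Nonempty S₂] [Nonempty A₂]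

theorem aux_W1_mass {S₁ S₂ : Type*} [Fintype S₁] [Fintype S₂]
    {P : S₁ → ℝ} {lam : S₁ → S₂ → ℝ} (hP : ∑ i, P i = 1)
    (h1 : ∀ i, ∑ j, lam i j = P i) : ∑ i, ∑ j, lam i j = 1 := by
  simp only [h1, hP]

theorem aux_coupling_ge {S₁ S₂ : Type*} [Fintype S₁] [Fintype S₂]
    {P : S₁ → ℝ} {Q : S₂ → ℝ} {d lam : S₁ → S₂ → ℝ} (U : S₁ → ℝ) (V : S₂ → ℝ) (c : ℝ)
    (hP : ∑ i, P i = 1) (h0 : ∀ i j, 0 ≤ lam i j)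
    (h1 : ∀ i, ∑ j, lam i j = P i) (h2 : ∀ j, ∑ i, lam i j = Q j)
    (hd : ∀ i j, U i - V j ≤ d i j + c) :
    (∑ i, P i * U i) - (∑ j, Q j * V j) - c ≤ ∑ i, ∑ j, lam i j * d i j := by
  have hm := aux_W1_mass hP h1
  have e1 : ∑ i, P i * U i = ∑ i, ∑ j, lam i j * U i := by
    refine Finset.sum_congr rfl fun i _ => ?_
    rw [← h1 i, Finset.sum_mul]
  have e2 : ∑ j, Q j * V j = ∑ i, ∑ j, lam i j * V j := by
    rw [Finset.sum_comm]
    refine Finset.sum_congr rfl fun j _ => ?_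
    rw [← h2 j, Finset.sum_mul]
  have e3 : c = ∑ i, ∑ j, lam i j * c := by
    simp only [← Finset.sum_mul]
    rw [hm, one_mul]
  have : (∑ i, P i * U i) - (∑ j, Q j * V j) - c
      = ∑ i, ∑ j, lam i j * (U i - V j - c) := by
    rw [e1, e2]
    conv_lhs => rw [e3]
    simp only [mul_sub, Finset.sum_sub_distrib]
  rw [this]
  refine Finset.sum_le_sum fun i _ => Finset.sum_le_sum fun j _ => ?_
  exact mul_le_mul_of_nonneg_left (by linarith [hd i j]) (h0 i j)

theorem aux_prod_mem {S₁ S₂ : Type*} [Fintype S₁] [Fintype S₂]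
    {P : S₁ → ℝ} {Q : S₂ → ℝ} (d : S₁ → S₂ → ℝ) (hP : ∑ i, P i = 1) (hQ : ∑ i, Q i = 1)
    (hP0 : ∀ i, 0 ≤ P i) (hQ0 : ∀ i, 0 ≤ Q i) :
    (∑ i, ∑ j, (P i * Q j) * d i j) ∈ { c : ℝ | ∃ lam : S₁ → S₂ → ℝ,
    (∀ i j, 0 ≤ lam i j) ∧ (∀ i, ∑ j, lam i j = P i) ∧
    (∀ j, ∑ i, lam i j = Q j) ∧ c = ∑ i, ∑ j, lam i j * d i j } := by
  refine ⟨fun i j => P i * Q j, fun i j => mul_nonneg (hP0 i) (hQ0 j), fun i => ?_, fun j => ?_, rfl⟩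
  · rw [← Finset.mul_sum, hQ, mul_one]
  · rw [← Finset.sum_mul, hP, one_mul]

theorem aux_W1_ge {S₁ S₂ : Type*} [Fintype S₁] [Fintype S₂]
    {P : S₁ → ℝ} {Q : S₂ → ℝ} {d : S₁ → S₂ → ℝ} (U : S₁ → ℝ) (V : S₂ → ℝ) (c : ℝ)
    (hP : ∑ i, P i = 1) (hQ : ∑ i, Q i = 1)
    (hP0 : ∀ i, 0 ≤ P i) (hQ0 : ∀ i, 0 ≤ Q i)
    (hd : ∀ i j, |U i - V j| ≤ d i j + c) :
    |(∑ i, P i * U i) - (∑ j, Q j * V j)| - c ≤ W1 P Q d := by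
  refine le_csInf ⟨_, aux_prod_mem d hP hQ hP0 hQ0⟩ ?_
  rintro x ⟨lam, h0, h1, h2, rfl⟩
  have a1 := aux_coupling_ge U V c hP h0 h1 h2 (fun i j => (le_abs_self _).trans (hd i j))
  have a2 := aux_coupling_ge (fun i => - U i) (fun j => - V j) c hP h0 h1 h2
    (fun i j => by have := (neg_le_abs _).trans (hd i j); linarith)
  simp only [mul_neg, Finset.sum_neg_distrib] at a2
  rw [sub_le_iff_le_add, abs_le]
  constructor <;> linarith

theorem aux_W1_le {S₁ S₂ : Type*} [Fintype S₁] [Fintype S₂]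
    {P : S₁ → ℝ} {Q : S₂ → ℝ} {d : S₁ → S₂ → ℝ} (B : ℝ)
    (hP : ∑ i, P i = 1) (hQ : ∑ i, Q i = 1)
    (hP0 : ∀ i, 0 ≤ P i) (hQ0 : ∀ i, 0 ≤ Q i)
    (hd : ∀ i j, d i j ≤ B) : W1 P Q d ≤ B := by
  have hbdd : BddBelow { c : ℝ | ∃ lam : S₁ → S₂ → ℝ,
      (∀ i j, 0 ≤ lam i j) ∧ (∀ i, ∑ j, lam i j = P i) ∧
      (∀ j, ∑ i, lam i j = Q j) ∧ c = ∑ i, ∑ j, lam i j * d i j } := by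
    obtain ⟨m, hm⟩ := (Set.finite_range (fun p : S₁ × S₂ => d p.1 p.2)).bddBelow
    refine ⟨m, ?_⟩
    rintro x ⟨lam, h0, h1, h2, rfl⟩
    have := aux_coupling_ge (d := d) (fun _ => 0) (fun _ => 0) (-m) hP h0 h1 h2
      (fun i j => by have : m ≤ d i j := hm ⟨(i, j), rfl⟩
                     linarith)
    simpa using this
  refine (csInf_le hbdd (aux_prod_mem d hP hQ hP0 hQ0)).trans ?_
  calc ∑ i, ∑ j, (P i * Q j) * d i j ≤ ∑ i, ∑ j, (P i * Q j) * B :=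
        Finset.sum_le_sum fun i _ => Finset.sum_le_sum fun j _ =>
          mul_le_mul_of_nonneg_left (hd i j) (mul_nonneg (hP0 i) (hQ0 j))
    _ = B := by
        simp only [← Finset.sum_mul, ← Finset.mul_sum]
        rw [hQ]; simp [hP]

theorem aux_expect {S : Type*} [Fintype S] {P : S → ℝ} (U V : S → ℝ) (c : ℝ)
    (hP : ∑ i, P i = 1) (hP0 : ∀ i, 0 ≤ P i) (h : ∀ i, |U i - V i| ≤ c) :
    |(∑ i, P i * U i) - ∑ i, P i * V i| ≤ c := by
  rw [← Finset.sum_sub_distrib]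
  refine (Finset.abs_sum_le_sum_abs _ _).trans ?_
  calc ∑ i, |P i * U i - P i * V i| ≤ ∑ i, P i * c := by
        refine Finset.sum_le_sum fun i _ => ?_
        rw [← mul_sub, abs_mul, abs_of_nonneg (hP0 i)]
        exact mul_le_mul_of_nonneg_left (h i) (hP0 i)
    _ = c := by rw [← Finset.sum_mul, hP, one_mul]

theorem aux_delta_ge (M₁ : FinMDP S₁ A₁) (M₂ : FinMDP S₂ A₂) (γ : ℝ) (hγ0 : 0 ≤ γ)
    (d : S₁ → S₂ → ℝ) (U : S₁ → ℝ) (V : S₂ → ℝ) (c : ℝ)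
    (hd : ∀ i j, |U i - V j| ≤ d i j + c) (s : S₁) (a : A₁) (s' : S₂) (a' : A₂) :
    |(M₁.R s a + γ * ∑ t, M₁.P s a t * U t) - (M₂.R s' a' + γ * ∑ t, M₂.P s' a' t * V t)|
      ≤ gbsmDelta M₁ M₂ γ d s a s' a' + γ * c := by
  have h := aux_W1_ge U V c (M₁.P_sum s a) (M₂.P_sum s' a') (M₁.P_nonneg s a)
    (M₂.P_nonneg s' a') hd
  have h' := mul_le_mul_of_nonneg_left h hγ0
  unfold gbsmDelta
  have e : (M₁.R s a + γ * ∑ t, M₁.P s a t * U t) - (M₂.R s' a' + γ * ∑ t, M₂.P s' a' t * V t)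
    = (M₁.R s a - M₂.R s' a') + γ * ((∑ t, M₁.P s a t * U t) - ∑ t, M₂.P s' a' t * V t) := by ring
  rw [e]
  refine (abs_add_le _ _).trans ?_
  rw [abs_mul, abs_of_nonneg hγ0]
  linarith

theorem aux_iter_le [Nonempty A₁] [Nonempty A₂]
    (M₁ : FinMDP S₁ A₁) (M₂ : FinMDP S₂ A₂) (γ Rbar : ℝ)
    (hγ0 : 0 ≤ γ) (hγ1 : γ < 1) (hRbar : 0 < Rbar)
    (hR₁ : ∀ s a, 0 ≤ M₁.R s a ∧ M₁.R s a ≤ Rbar)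
    (hR₂ : ∀ s a, 0 ≤ M₂.R s a ∧ M₂.R s a ≤ Rbar) (n : ℕ) :
    ∀ s s', (gbsmF M₁ M₂ γ)^[n] (fun _ _ => 0) s s' ≤ Rbar / (1 - γ) := by
  have h1 : 0 < 1 - γ := by linarith
  induction n with
  | zero => intro s s'; simp only [Function.iterate_zero, id]; positivity
  | succ n ih =>
    intro s s'
    rw [Function.iterate_succ_apply']
    set d := (gbsmF M₁ M₂ γ)^[n] (fun _ _ => 0)
    have key : ∀ a a', gbsmDelta M₁ M₂ γ d s a s' a' ≤ Rbar / (1 - γ) := by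
      intro a a'
      unfold gbsmDelta
      have hw := aux_W1_le (Rbar / (1 - γ)) (M₁.P_sum s a) (M₂.P_sum s' a') (M₁.P_nonneg s a)
        (M₂.P_nonneg s' a') ih
      have hr : |M₁.R s a - M₂.R s' a'| ≤ Rbar := by
        rw [abs_le]
        constructor <;> linarith [hR₁ s a, hR₂ s' a', (hR₁ s a).1, (hR₁ s a).2, (hR₂ s' a').1, (hR₂ s' a').2]
      have e : Rbar / (1 - γ) = Rbar + γ * (Rbar / (1 - γ)) := by field_simp; ring
      rw [e]
      exact add_le_add hr (mul_le_mul_of_nonneg_left hw hγ0)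
    unfold gbsmF
    refine max_le (ciSup_le fun a => ?_) ?_
    · exact (ciInf_le (Set.finite_range _).bddBelow (Classical.arbitrary A₂)).trans (key _ _)
    · exact (ciInf_le (Set.finite_range _).bddBelow (Classical.arbitrary A₁)).trans
        (ciSup_le fun a' => key _ _)

theorem aux_iter_ge [Nonempty A₁] [Nonempty A₂]
    (M₁ : FinMDP S₁ A₁) (M₂ : FinMDP S₂ A₂) (γ : ℝ) (hγ0 : 0 ≤ γ)
    (V₁star : S₁ → ℝ) (V₂star : S₂ → ℝ)
    (hV₁star : ∀ s, V₁star s = ⨆ a : A₁, (M₁.R s a + γ * ∑ t, M₁.P s a t * V₁star t))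
    (hV₂star : ∀ s', V₂star s' = ⨆ a : A₂, (M₂.R s' a + γ * ∑ t, M₂.P s' a t * V₂star t))
    (C : ℝ) (hC : ∀ s s', |V₁star s - V₂star s'| ≤ C) (n : ℕ) :
    ∀ s s', |V₁star s - V₂star s'| ≤ (gbsmF M₁ M₂ γ)^[n] (fun _ _ => 0) s s' + γ ^ n * C := by
  induction n with
  | zero => intro s s'; simpa using hC s s'
  | succ n ih =>
    intro s s'
    rw [Function.iterate_succ_apply']
    set d := (gbsmF M₁ M₂ γ)^[n] (fun _ _ => 0)
    have key := fun a a' => abs_le.1 (aux_delta_ge M₁ M₂ γ hγ0 d V₁star V₂star (γ ^ n * C) ih s a s' a')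
    have ec : γ * (γ ^ n * C) = γ ^ (n + 1) * C := by ring
    rw [ec] at key
    obtain ⟨a0, h0⟩ := exists_eq_ciSup_of_finite
      (f := fun a : A₁ => M₁.R s a + γ * ∑ t, M₁.P s a t * V₁star t)
    obtain ⟨b0, k0⟩ := exists_eq_ciSup_of_finite
      (f := fun a : A₂ => M₂.R s' a + γ * ∑ t, M₂.P s' a t * V₂star t)
    rw [← hV₁star s] at h0
    rw [← hV₂star s'] at k0
    have hle1 : ∀ a, M₁.R s a + γ * ∑ t, M₁.P s a t * V₁star t ≤ V₁star s := fun a => by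
      rw [hV₁star s]
      exact le_ciSup (f := fun a : A₁ => M₁.R s a + γ * ∑ t, M₁.P s a t * V₁star t)
        (Set.finite_range _).bddAbove a
    have hle2 : ∀ a, M₂.R s' a + γ * ∑ t, M₂.P s' a t * V₂star t ≤ V₂star s' := fun a => by
      rw [hV₂star s']
      exact le_ciSup (f := fun a : A₂ => M₂.R s' a + γ * ∑ t, M₂.P s' a t * V₂star t)
        (Set.finite_range _).bddAbove a
    have p1 : V₁star s - V₂star s' - γ ^ (n + 1) * C ≤ gbsmF M₁ M₂ γ d s s' := by
      refine le_trans ?_ (le_max_left _ _)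
      refine le_trans ?_ (le_ciSup (f := fun a => ⨅ a' : A₂, gbsmDelta M₁ M₂ γ d s a s' a')
        (Set.finite_range _).bddAbove a0)
      refine le_ciInf fun b => ?_
      have := (key a0 b).2
      have := hle2 b
      linarith
    have p2 : V₂star s' - V₁star s - γ ^ (n + 1) * C ≤ gbsmF M₁ M₂ γ d s s' := by
      refine le_trans ?_ (le_max_right _ _)
      refine le_ciInf fun a => ?_
      refine le_trans ?_ (le_ciSup (f := fun a' => gbsmDelta M₁ M₂ γ d s a s' a')
        (Set.finite_range _).bddAbove b0)
      have := (key a b0).1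
      have := hle1 a
      linarith
    rw [abs_le]
    constructor <;> linarith

theorem aux_gbsm_ge [Nonempty A₁] [Nonempty A₂]
    (M₁ : FinMDP S₁ A₁) (M₂ : FinMDP S₂ A₂) (γ Rbar : ℝ)
    (hγ0 : 0 ≤ γ) (hγ1 : γ < 1) (hRbar : 0 < Rbar)
    (hR₁ : ∀ s a, 0 ≤ M₁.R s a ∧ M₁.R s a ≤ Rbar)
    (hR₂ : ∀ s a, 0 ≤ M₂.R s a ∧ M₂.R s a ≤ Rbar)
    (V₁star : S₁ → ℝ) (V₂star : S₂ → ℝ)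
    (hV₁star : ∀ s, V₁star s = ⨆ a : A₁, (M₁.R s a + γ * ∑ t, M₁.P s a t * V₁star t))
    (hV₂star : ∀ s', V₂star s' = ⨆ a : A₂, (M₂.R s' a + γ * ∑ t, M₂.P s' a t * V₂star t))
    (s : S₁) (s' : S₂) : |V₁star s - V₂star s'| ≤ gbsm M₁ M₂ γ s s' := by
  obtain ⟨C, hC⟩ := (Set.finite_range
    (fun p : S₁ × S₂ => |V₁star p.1 - V₂star p.2|)).bddAbove
  have hit := aux_iter_ge M₁ M₂ γ hγ0 V₁star V₂star hV₁star hV₂star C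
    (fun s s' => hC ⟨(s, s'), rfl⟩)
  have hlim : Filter.Tendsto (fun n : ℕ => gbsm M₁ M₂ γ s s' + γ ^ n * C) Filter.atTop
      (nhds (gbsm M₁ M₂ γ s s' + 0 * C)) :=
    ((tendsto_pow_atTop_nhds_zero_of_lt_one hγ0 hγ1).mul_const C).const_add _
  rw [zero_mul, add_zero] at hlim
  refine ge_of_tendsto' hlim fun n => (hit n s s').trans ?_
  gcongr
  refine le_ciSup (f := fun n => (gbsmF M₁ M₂ γ)^[n] (fun _ _ => 0) s s') ⟨Rbar / (1 - γ), ?_⟩ n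
  rintro _ ⟨m, rfl⟩
  exact aux_iter_le M₁ M₂ γ Rbar hγ0 hγ1 hRbar hR₁ hR₂ m s s'

/-- regret bound for a policy transferred from `M₁` to `M₂` via a state
mapping `f` and an action mapping `g`. -/
theorem policy_transfer_regret_bound
    (M₁ : FinMDP S₁ A₁) (M₂ : FinMDP S₂ A₂) (γ Rbar : ℝ)
    (hγ0 : 0 ≤ γ) (hγ1 : γ < 1) (hRbar : 0 < Rbar)
    (hR₁ : ∀ s a, 0 ≤ M₁.R s a ∧ M₁.R s a ≤ Rbar)
    (hR₂ : ∀ s a, 0 ≤ M₂.R s a ∧ M₂.R s a ≤ Rbar)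
    (π : S₁ → A₁) (f : S₂ → S₁) (g : A₁ → A₂)
    (V₁star V₁pi : S₁ → ℝ) (V₂star V₂pi : S₂ → ℝ)
    (hV₁star : ∀ s, V₁star s = ⨆ a : A₁, (M₁.R s a + γ * ∑ t, M₁.P s a t * V₁star t))
    (hV₂star : ∀ s', V₂star s' = ⨆ a : A₂, (M₂.R s' a + γ * ∑ t, M₂.P s' a t * V₂star t))
    (hV₁pi : ∀ s, V₁pi s = M₁.R s (π s) + γ * ∑ t, M₁.P s (π s) t * V₁pi t)
    (hV₂pi : ∀ s', V₂pi s' =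
      M₂.R s' (g (π (f s'))) + γ * ∑ t, M₂.P s' (g (π (f s'))) t * V₂pi t) :
    (⨆ s' : S₂, |V₂star s' - V₂pi s'|) ≤
      ((⨆ s' : S₂, gbsm M₁ M₂ γ (f s') s') +
        (⨆ s' : S₂, ⨆ a : A₁, gbsmDelta M₁ M₂ γ (gbsm M₁ M₂ γ) (f s') a s' (g a)) +
        (1 + γ) * ⨆ s : S₁, |V₁star s - V₁pi s|) / (1 - γ) := by
  have h1 : 0 < 1 - γ := by linarith
  have hA := aux_gbsm_ge M₁ M₂ γ Rbar hγ0 hγ1 hRbar hR₁ hR₂ V₁star V₂star hV₁star hV₂star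
  set X := ⨆ s' : S₂, |V₂star s' - V₂pi s'| with hX
  set D := ⨆ s' : S₂, gbsm M₁ M₂ γ (f s') s' with hD
  set E := ⨆ s' : S₂, ⨆ a : A₁, gbsmDelta M₁ M₂ γ (gbsm M₁ M₂ γ) (f s') a s' (g a) with hE
  set ρ := ⨆ s : S₁, |V₁star s - V₁pi s| with hρ
  have bX : ∀ s', |V₂star s' - V₂pi s'| ≤ X := fun s' =>
    le_ciSup (f := fun s' => |V₂star s' - V₂pi s'|) (Set.finite_range _).bddAbove s'
  have bD : ∀ s', gbsm M₁ M₂ γ (f s') s' ≤ D := fun s' =>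
    le_ciSup (f := fun s' => gbsm M₁ M₂ γ (f s') s') (Set.finite_range _).bddAbove s'
  have bρ : ∀ s, |V₁star s - V₁pi s| ≤ ρ := fun s =>
    le_ciSup (f := fun s => |V₁star s - V₁pi s|) (Set.finite_range _).bddAbove s
  have bE : ∀ s' a, gbsmDelta M₁ M₂ γ (gbsm M₁ M₂ γ) (f s') a s' (g a) ≤ E := fun s' a =>
    (le_ciSup (f := fun a => gbsmDelta M₁ M₂ γ (gbsm M₁ M₂ γ) (f s') a s' (g a))
      (Set.finite_range _).bddAbove a).trans
    (le_ciSup (f := fun s' => ⨆ a : A₁, gbsmDelta M₁ M₂ γ (gbsm M₁ M₂ γ) (f s') a s' (g a))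
      (Set.finite_range _).bddAbove s')
  have main : X ≤ D + E + (1 + γ) * ρ + γ * X := by
    refine ciSup_le fun s' => ?_
    have t1 := abs_le.1 ((hA (f s') s').trans (bD s'))
    have t2 := abs_le.1 (bρ (f s'))
    have t3 := abs_le.1 (aux_delta_ge M₁ M₂ γ hγ0 (gbsm M₁ M₂ γ) V₁star V₂star 0
      (fun i j => by rw [add_zero]; exact hA i j) (f s') (π (f s')) s' (g (π (f s'))))
    have t4 := bE s' (π (f s'))
    have t5 := abs_le.1 (aux_expect V₁star V₁pi ρ (M₁.P_sum (f s') (π (f s')))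
      (M₁.P_nonneg _ _) bρ)
    have t6 := abs_le.1 (aux_expect V₂star V₂pi X (M₂.P_sum s' (g (π (f s'))))
      (M₂.P_nonneg _ _) bX)
    have t7 := hV₁pi (f s')
    have t8 := hV₂pi s'
    have u1 := mul_le_mul_of_nonneg_left t5.1 hγ0
    have u2 := mul_le_mul_of_nonneg_left t5.2 hγ0
    have u3 := mul_le_mul_of_nonneg_left t6.1 hγ0
    have u4 := mul_le_mul_of_nonneg_left t6.2 hγ0
    obtain ⟨t1a, t1b⟩ := t1
    obtain ⟨t2a, t2b⟩ := t2
    obtain ⟨t3a, t3b⟩ := t3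
    rw [abs_le]
    constructor <;> linarith
  rw [le_div_iff₀ h1]
  linarith

end
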